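/- Let q be an odd prime power and f : F_{q^{s₁}} → F_q a quadratic form of rank R ≥ 3. For each a ∈ F_q*, there exists an F_q-subspace H of F_{q^{s₁}} of dimension s₁ - R + l₀, where l₀ = (R-1)/2 if R is odd and l₀ = R/2 if R is even, such that the restriction of f to H has rank 1 and sign η(a). -/

import Mathlib

open Module

/-- The radical of a quadratic form: the kernel of its polar bilinear form. -/
def qfRadical {F E : Type*} [Field F] [AddCommGroup E] [Module F E]
    (f : QuadraticForm F E) : Submodule F E :=
  LinearMap.ker (QuadraticMap.polarBilin f)

/-- `f` restricted to the subspace `H` (of dimension `r`) is a quadratic form of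
rank `R` and sign `ε`. -/
def HasRankSignOn {F E : Type*} [Field F] [Fintype F] [DecidableEq F]
    [AddCommGroup E] [Module F E] (f : QuadraticForm F E) (H : Submodule F E)
    (r R : ℕ) (ε : ℤ) : Prop :=
  ∃ (hRr : R ≤ r) (b : Basis (Fin r) F H) (lam : Fin R → F),
    (∀ i, lam i ≠ 0) ∧
    (∀ x : H, f (x : E) = ∑ i : Fin R, lam i * (b.repr x (Fin.castLE hRr i)) ^ 2) ∧
    ε = quadraticChar F (∏ i, lam i)

/-!
Start from the radical of `f`, which is totally singular, and suppose that `W ≥ rad f` is totally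
singular of dimension `dim rad f + n`. Its polar orthogonal `Wᗮ` contains `W`, and the restriction
of `f` to `Wᗮ` has radical `W` and rank `R - 2n`. Over a finite field of odd characteristic a form
of rank at least `3` vanishes somewhere off its radical, so `W` can be enlarged by a line of `Wᗮ`
as long as `2n + 3 ≤ R`. A form of rank at least `2` takes every value, so as long as `2n + 2 ≤ R`
there is some `v ∈ Wᗮ` with `f v = a`, and on `W + ⟨v⟩` the form is `a` times the square of the
`v`-coordinate.
-/

open QuadraticMap LinearMap.BilinForm

theorem exists_mul_sq_add_mul_sq_eq {K : Type*} [Field K] [Finite K] {d e : K}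
    (hd : d ≠ 0) (he : e ≠ 0) (a : K) : ∃ x y : K, d * x ^ 2 + e * y ^ 2 = a := by
  have := Fintype.ofFinite K
  by_cases hK : ringChar K = 2
  · obtain ⟨x, hx⟩ := FiniteField.isSquare_of_char_two hK (a / d)
    refine ⟨x, 0, ?_⟩
    rw [pow_two x, ← hx, mul_div_cancel₀ a hd]
    ring
  · open Polynomial in
    obtain ⟨x, y, hxy⟩ := FiniteField.exists_root_sum_quadratic
      (f := C d * X ^ 2) (g := C e * X ^ 2 + C 0 * X + C (-a))
      (degree_C_mul_X_pow 2 hd) (degree_quadratic he)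
      (FiniteField.odd_card_of_char_ne_two hK)
    simp only [eval_add, eval_mul, eval_C, eval_pow, eval_X] at hxy
    exact ⟨x, y, by linear_combination hxy⟩

section BilinForm

variable {K V : Type*} [Field K] [AddCommGroup V] [Module K V] [FiniteDimensional K V]
  {B : LinearMap.BilinForm K V} {W : Submodule K V}

theorem finrank_add_finrank_orthogonal_of_ker_le (hW : LinearMap.ker B ≤ W) :
    finrank K W + finrank K (B.orthogonal W) = finrank K V + finrank K (LinearMap.ker B) := by
  rw [finrank_add_finrank_orthogonal', inf_eq_right.2 hW]

theorem orthogonal_orthogonal_of_ker_le (hB : B.IsRefl) (hW : LinearMap.ker B ≤ W) :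
    B.orthogonal (B.orthogonal W) = W := by
  have hker : LinearMap.ker B ≤ B.orthogonal W := fun x hx y _ =>
    hB x y (LinearMap.congr_fun hx y)
  have h₁ := finrank_add_finrank_orthogonal_of_ker_le hW
  have h₂ := finrank_add_finrank_orthogonal_of_ker_le hker
  exact (Submodule.eq_of_le_of_finrank_eq (le_orthogonal_orthogonal hB) (by lia)).symm

end BilinForm

theorem exists_basis_sup_span_singleton {K V : Type*} [Field K] [AddCommGroup V] [Module K V]
    {W : Submodule K V} [FiniteDimensional K W] {v : V} (hv : v ∉ W) :
    ∃ b : Basis (Fin (finrank K W + 1)) K ↥(W ⊔ K ∙ v),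
      ∀ x : ↥(W ⊔ K ∙ v), ∃ w ∈ W, (x : V) = w + b.repr x 0 • v := by
  have hmem : v ∈ W ⊔ K ∙ v := Submodule.mem_sup_right (Submodule.mem_span_singleton_self v)
  have hindep (c : K) (w : V) (hw : w ∈ W) (hcw : c • v + w = 0) : c = 0 := by
    by_contra hc
    exact hv ((W.smul_mem_iff hc).1 (eq_neg_of_add_eq_zero_left hcw ▸ W.neg_mem hw))
  have hspan (z : V) (hz : z ∈ W ⊔ K ∙ v) : ∃ c : K, z + c • v ∈ W := by
    obtain ⟨w, hw, _, hcv, rfl⟩ := Submodule.mem_sup.1 hz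
    obtain ⟨c, rfl⟩ := Submodule.mem_span_singleton.1 hcv
    exact ⟨-c, by simpa using hw⟩
  obtain ⟨b, hb⟩ : ∃ b : Basis (Fin (finrank K W + 1)) K ↥(W ⊔ K ∙ v),
      ⇑b = Fin.cons ⟨v, hmem⟩ (Submodule.inclusion le_sup_left ∘ finBasis K W) :=
    ⟨_, Basis.coe_mkFinConsOfLE v hmem (finBasis K W) le_sup_left hindep hspan⟩
  refine ⟨b, fun x => ⟨∑ i : Fin (finrank K W), b.repr x i.succ • (finBasis K W i : V),
    W.sum_mem fun i _ => W.smul_mem _ (finBasis K W i).2, ?_⟩⟩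
  have hx := congrArg Subtype.val (b.sum_repr x)
  simp only [hb, Fin.sum_univ_succ, Fin.cons_zero, Fin.cons_succ, Function.comp_apply,
    Submodule.coe_add, Submodule.coe_smul, AddSubmonoidClass.coe_finsetSum,
    Submodule.coe_inclusion] at hx
  rw [add_comm, hx]

theorem isRefl_polarBilin {R M : Type*} [CommRing R] [AddCommGroup M] [Module R M]
    (Q : QuadraticForm R M) : LinearMap.BilinForm.IsRefl Q.polarBilin := fun x y h =>
  (polar_comm Q y x).trans h

/-- A submodule is totally singular for `Q` if `Q` vanishes on it. This makes it orthogonal to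
itself, and is equivalent to that when `2` is invertible. -/
def IsTotallySingular {R M N : Type*} [CommRing R] [AddCommGroup M] [Module R M]
    [AddCommGroup N] [Module R N] (Q : QuadraticMap R M N) (W : Submodule R M) : Prop :=
  ∀ x ∈ W, Q x = 0

namespace IsTotallySingular

variable {R M : Type*} [CommRing R] [AddCommGroup M] [Module R M] {Q : QuadraticForm R M}
  {W : Submodule R M} {v : M}

theorem radical (Q : QuadraticForm R M) : IsTotallySingular Q Q.radical := fun _ hx => hx.1

theorem le_orthogonal (hW : IsTotallySingular Q W) : W ≤ orthogonal Q.polarBilin W :=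
  fun x hx y hy => by
    simp [polar, hW x hx, hW y hy, hW _ (add_mem hy hx)]

theorem apply_add_smul (hW : IsTotallySingular Q W) (hv : v ∈ orthogonal Q.polarBilin W)
    {w : M} (hw : w ∈ W) (c : R) : Q (w + c • v) = Q v * c ^ 2 := by
  have hwv : polar Q w v = 0 := hv w hw
  rw [QuadraticMap.map_add Q, QuadraticMap.map_smul, polar_smul_right, hwv, hW w hw]
  simp only [smul_eq_mul]
  ring

theorem sup_span_singleton (hW : IsTotallySingular Q W) (hv : v ∈ orthogonal Q.polarBilin W)
    (hQv : Q v = 0) : IsTotallySingular Q (W ⊔ R ∙ v) := fun x hx => by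
  obtain ⟨w, hw, _, hcv, rfl⟩ := Submodule.mem_sup.1 hx
  obtain ⟨c, rfl⟩ := Submodule.mem_span_singleton.1 hcv
  rw [hW.apply_add_smul hv hw, hQv, zero_mul]

end IsTotallySingular

section InvertibleTwo

variable {K V : Type*} [Field K] [Invertible (2 : K)] [AddCommGroup V] [Module K V]
  [FiniteDimensional K V] {Q : QuadraticForm K V} {W : Submodule K V}

theorem exists_orthogonal_family_of_finrank_radical_add_le {n : ℕ}
    (hn : finrank K Q.radical + n ≤ finrank K V) :
    ∃ v : Fin n → V, (∀ i, Q (v i) ≠ 0) ∧ Pairwise fun i j => polar Q (v i) (v j) = 0 := by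
  obtain ⟨b, hb⟩ := exists_orthogonal_basis (B := associated Q) ⟨associated_isSymm K Q⟩
  have hequiv : Equivalent Q (weightedSumSquares K fun i => Q (b i)) :=
    basisRepr_eq_of_iIsOrtho Q b hb ▸ ⟨Q.isometryEquivBasisRepr b⟩
  classical
  have hcard : n ≤ Fintype.card {i // Q (b i) ≠ 0} := by
    have hadd := Set.ncard_add_ncard_compl {i | Q (b i) = 0}
    rw [← QuadraticForm.finrank_radical_of_equiv_weightedSumSquares hequiv, Nat.card_fin] at hadd
    calc n ≤ {i | Q (b i) = 0}ᶜ.ncard := by lia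
      _ = Fintype.card {i // Q (b i) ≠ 0} := Nat.card_eq_fintype_card
  obtain ⟨g⟩ : Nonempty (Fin n ↪ {i // Q (b i) ≠ 0}) :=
    Function.Embedding.nonempty_of_card_le (by rwa [Fintype.card_fin])
  refine ⟨fun i => b (g i), fun i => (g i).2, fun i j hij => ?_⟩
  exact (associated_isOrtho.1 (hb fun h => hij (g.injective (Subtype.ext h)))).polar_eq_zero

theorem radical_comp_subtype_orthogonal (hrad : Q.radical ≤ W) (hW : IsTotallySingular Q W) :
    (Q.comp (orthogonal Q.polarBilin W).subtype).radical =
      W.comap (orthogonal Q.polarBilin W).subtype := by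
  have hWW := orthogonal_orthogonal_of_ker_le (isRefl_polarBilin Q)
    (radical_eq_ker_polarBilin (Q := Q) ▸ hrad)
  ext x
  constructor
  · intro hx
    refine hWW.le (?_ : (x : V) ∈ _)
    exact fun y hy => isRefl_polarBilin Q _ _ (LinearMap.congr_fun hx.2 ⟨y, hy⟩)
  · exact fun hx => ⟨hW x hx, LinearMap.ext fun y => y.2 x hx⟩

theorem finrank_radical_comp_subtype_orthogonal (hrad : Q.radical ≤ W)
    (hW : IsTotallySingular Q W) :
    finrank K (Q.comp (orthogonal Q.polarBilin W).subtype).radical = finrank K W := by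
  rw [radical_comp_subtype_orthogonal hrad hW]
  exact (Submodule.comapSubtypeEquivOfLe hW.le_orthogonal).finrank_eq

theorem finrank_add_finrank_orthogonal_polarBilin (hrad : Q.radical ≤ W) :
    finrank K W + finrank K (orthogonal Q.polarBilin W) =
      finrank K V + finrank K Q.radical := by
  rw [radical_eq_ker_polarBilin] at hrad ⊢
  exact finrank_add_finrank_orthogonal_of_ker_le hrad

section Finite

variable [Finite K]

theorem surjective_of_finrank_radical_add_two_le
    (hQ : finrank K Q.radical + 2 ≤ finrank K V) : Function.Surjective Q := fun a => by
  obtain ⟨v, hv, hortho⟩ := exists_orthogonal_family_of_finrank_radical_add_le hQ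
  obtain ⟨x, y, hxy⟩ := exists_mul_sq_add_mul_sq_eq (hv 0) (hv 1) a
  have h01 : polar Q (v 0) (v 1) = 0 := hortho (by decide)
  refine ⟨x • v 0 + y • v 1, ?_⟩
  rw [QuadraticMap.map_add Q, QuadraticMap.map_smul, QuadraticMap.map_smul, polar_smul_left,
    polar_smul_right, h01]
  simp only [smul_eq_mul]
  linear_combination hxy

theorem exists_eq_zero_notMem_radical_of_finrank_radical_add_three_le
    (hQ : finrank K Q.radical + 3 ≤ finrank K V) : ∃ v ∉ Q.radical, Q v = 0 := by
  obtain ⟨v, hv, hortho⟩ := exists_orthogonal_family_of_finrank_radical_add_le hQ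
  obtain ⟨x, y, hxy⟩ := exists_mul_sq_add_mul_sq_eq (hv 0) (hv 1) (-Q (v 2))
  have h01 : polar Q (v 0) (v 1) = 0 := hortho (by decide)
  have h02 : polar Q (v 0) (v 2) = 0 := hortho (by decide)
  have h12 : polar Q (v 1) (v 2) = 0 := hortho (by decide)
  refine ⟨x • v 0 + y • v 1 + v 2, fun hmem => hv 2 ?_, ?_⟩
  · have hpolar : polar Q (x • v 0 + y • v 1 + v 2) (v 2) = 0 := LinearMap.congr_fun hmem.2 (v 2)
    simpa [polar_add_left, polar_smul_left, h02, h12, polar_self, Invertible.ne_zero] using hpolar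
  · simp only [QuadraticMap.map_add Q, QuadraticMap.map_smul, polar_add_left, polar_smul_left,
      polar_smul_right, h01, h02, h12, smul_eq_mul]
    linear_combination hxy

theorem IsTotallySingular.exists_mem_orthogonal_apply_eq (hrad : Q.radical ≤ W)
    (hW : IsTotallySingular Q W)
    (hdim : 2 * finrank K W + 2 ≤ finrank K V + finrank K Q.radical) (a : K) :
    ∃ v ∈ orthogonal Q.polarBilin W, Q v = a := by
  have horthogonal := finrank_add_finrank_orthogonal_polarBilin hrad
  have hrestrict := finrank_radical_comp_subtype_orthogonal hrad hW
  obtain ⟨v, hv⟩ := surjective_of_finrank_radical_add_two_le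
    (Q := Q.comp (orthogonal Q.polarBilin W).subtype) (by lia) a
  exact ⟨v, v.2, hv⟩

theorem IsTotallySingular.exists_mem_orthogonal_notMem_apply_eq_zero (hrad : Q.radical ≤ W)
    (hW : IsTotallySingular Q W)
    (hdim : 2 * finrank K W + 3 ≤ finrank K V + finrank K Q.radical) :
    ∃ v ∈ orthogonal Q.polarBilin W, v ∉ W ∧ Q v = 0 := by
  have horthogonal := finrank_add_finrank_orthogonal_polarBilin hrad
  have hrestrict := finrank_radical_comp_subtype_orthogonal hrad hW
  obtain ⟨v, hv, hQv⟩ := exists_eq_zero_notMem_radical_of_finrank_radical_add_three_le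
    (Q := Q.comp (orthogonal Q.polarBilin W).subtype) (by lia)
  rw [radical_comp_subtype_orthogonal hrad hW] at hv
  exact ⟨v, v.2, hv, hQv⟩

theorem exists_isTotallySingular_finrank_eq (Q : QuadraticForm K V) (n : ℕ)
    (hn : finrank K Q.radical + (2 * n + 1) ≤ finrank K V) :
    ∃ W : Submodule K V, Q.radical ≤ W ∧ IsTotallySingular Q W ∧
      finrank K W = finrank K Q.radical + n := by
  induction n with
  | zero => exact ⟨Q.radical, le_rfl, .radical Q, rfl⟩
  | succ n ih =>
    obtain ⟨W, hrad, hW, hdim⟩ := ih (by lia)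
    obtain ⟨v, hv, hvW, hQv⟩ :=
      hW.exists_mem_orthogonal_notMem_apply_eq_zero hrad (by lia)
    refine ⟨W ⊔ K ∙ v, hrad.trans le_sup_left, hW.sup_span_singleton hv hQv, ?_⟩
    rw [Submodule.finrank_sup_span_singleton hvW, hdim, add_assoc]

end Finite

end InvertibleTwo

namespace HasRankSignOn

variable {F V : Type*} [Field F] [Fintype F] [DecidableEq F] [AddCommGroup V] [Module F V]
  {Q : QuadraticForm F V}

theorem finrank_eq {H : Submodule F V} {r R : ℕ} {ε : ℤ} (h : HasRankSignOn Q H r R ε) :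
    finrank F H = r := by
  obtain ⟨_, b, _⟩ := h
  rw [finrank_eq_card_basis b, Fintype.card_fin]

theorem sup_span_singleton {W : Submodule F V} [FiniteDimensional F W] {v : V}
    (hW : IsTotallySingular Q W) (hv : v ∈ orthogonal Q.polarBilin W) (hQv : Q v ≠ 0) :
    HasRankSignOn Q (W ⊔ F ∙ v) (finrank F W + 1) 1 (quadraticChar F (Q v)) := by
  have hvW : v ∉ W := fun h => hQv (hW v h)
  obtain ⟨b, hb⟩ := exists_basis_sup_span_singleton hvW
  refine ⟨Nat.le_add_left 1 _, b, fun _ => Q v, fun _ => hQv, fun x => ?_, by simp⟩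
  obtain ⟨w, hw, hx⟩ := hb x
  rw [hx, hW.apply_add_smul hv hw]
  simp

end HasRankSignOn

theorem stmt_14_general (F : Type*) [Field F] [Fintype F] [DecidableEq F]
    (hq : ringChar F ≠ 2)
    (E₁ : Type*) [AddCommGroup E₁] [Module F E₁] [FiniteDimensional F E₁]
    (f : QuadraticForm F E₁) (R : ℕ)
    (hrank : R + finrank F (qfRadical f) = finrank F E₁)
    (l : ℕ) (hl : 1 ≤ l) (hlR : 2 * l ≤ R) (a : F) (ha : a ≠ 0) :
    ∃ H : Submodule F E₁, finrank F H = finrank F E₁ - R + l ∧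
      HasRankSignOn f H (finrank F E₁ - R + l) 1 (quadraticChar F a) := by
  have := invertibleOfNonzero (Ring.two_ne_zero hq)
  have hrad : qfRadical f = f.radical := radical_eq_ker_polarBilin.symm
  rw [hrad] at hrank
  obtain ⟨W, hradW, hW, hdim⟩ := exists_isTotallySingular_finrank_eq f (l - 1) (by lia)
  obtain ⟨v, hv, rfl⟩ := hW.exists_mem_orthogonal_apply_eq hradW (by lia) a
  have hH := HasRankSignOn.sup_span_singleton hW hv ha
  rw [show finrank F W + 1 = finrank F E₁ - R + l by lia] at hH
  exact ⟨W ⊔ F ∙ v, hH.finrank_eq, hH⟩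

/-- For a quadratic form `f` of rank `R ≥ 3` and each `a ∈ F_q*`,
there is a subspace `H` of dimension `s₁ - R + l₀` (with `l₀ = (R-1)/2` for `R`
odd, `l₀ = R/2` for `R` even) on which `f` restricts with rank `1` and sign
`η(a)`. -/
theorem stmt_14 (F : Type*) [Field F] [Fintype F] [DecidableEq F]
    (hq : ringChar F ≠ 2)
    (E₁ : Type*) [AddCommGroup E₁] [Module F E₁] [FiniteDimensional F E₁]
    (f : QuadraticForm F E₁) (R : ℕ)
    (hrank : R + finrank F (qfRadical f) = finrank F E₁)
    (hR3 : 3 ≤ R) (a : F) (ha : a ≠ 0) :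
    ∃ H : Submodule F E₁,
      finrank F H = finrank F E₁ - R + (if Odd R then (R - 1) / 2 else R / 2) ∧
      HasRankSignOn f H (finrank F E₁ - R + (if Odd R then (R - 1) / 2 else R / 2))
        1 (quadraticChar F a) := by
  split_ifs <;> exact stmt_14_general F hq E₁ f R hrank _ (by lia) (by lia) a ha
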